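/- (Finite Sanov Theorem) Let q be a strictly positive pmf on a finite set X of size m and let Π be a set of pmfs on X that is the closure of its interior with I(Π||q) < ∞. Then (1/n) log P(ν^n ∈ Π) → -I(Π||q) as n → ∞, where ν^n is the empirical type of n i.i.d. draws from q and I(Π||q) = inf_{p∈Π} I(p||q). -/

import Mathlib

open Finset Real Filter

def simplexSet (X : Type*) [Fintype X] : Set (X → ℝ) :=
  {p | (∀ x, 0 ≤ p x) ∧ ∑ x, p x = 1}

/-- I-divergence (KL divergence), real-valued. -/
noncomputable def Idiv {X : Type*} [Fintype X] (p q : X → ℝ) : ℝ :=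
  ∑ x, p x * Real.log (p x / q x)

/-- Empirical type of the sample `s`. -/
noncomputable def empType {X : Type*} [Fintype X] [DecidableEq X] (n : ℕ)
    (s : Fin n → X) : X → ℝ :=
  fun x => ((Finset.univ.filter (fun j => s j = x)).card : ℝ) / n

open Classical in
/-- Probability that the empirical type of `n` i.i.d. draws from `q` lies in `Π`. -/
noncomputable def typeProb {X : Type*} [Fintype X] [DecidableEq X] (q : X → ℝ)
    (Pi : Set (X → ℝ)) (n : ℕ) : ℝ :=
  ∑ s : Fin n → X, if empType n s ∈ Pi then ∏ j, q (s j) else 0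

lemma sanov_sum_emp {X : Type*} [Fintype X] [DecidableEq X] {n : ℕ} (hn : 0 < n)
    (s : Fin n → X) (f : X → ℝ) : ∑ j, f (s j) = n * ∑ x, empType n s x * f x := by
  have hn' : (n : ℝ) ≠ 0 := by positivity
  rw [← Finset.sum_fiberwise_of_maps_to (s := Finset.univ) (t := Finset.univ) (g := s)
    (fun _ _ => Finset.mem_univ _), Finset.mul_sum]
  refine Finset.sum_congr rfl fun x _ => ?_
  rw [Finset.sum_congr rfl (g := fun _ => f x)]
  · rw [Finset.sum_const, nsmul_eq_mul]
    unfold empType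
    field_simp
  · intro j hj
    rw [(Finset.mem_filter.1 hj).2]

lemma sanov_emp_mem {X : Type*} [Fintype X] [DecidableEq X] {n : ℕ} (hn : 0 < n)
    (s : Fin n → X) : empType n s ∈ simplexSet X := by
  have hn' : (n : ℝ) ≠ 0 := by positivity
  refine ⟨fun x => by unfold empType; positivity, ?_⟩
  have h := sanov_sum_emp hn s (fun _ => 1)
  simp only [Finset.sum_const, Finset.card_univ, Fintype.card_fin, nsmul_eq_mul, mul_one] at h
  have : (n : ℝ) * 1 = n * ∑ x, empType n s x := by linarith
  exact (mul_left_cancel₀ hn' this).symm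

lemma sanov_emp_pos {X : Type*} [Fintype X] [DecidableEq X] {n : ℕ} (hn : 0 < n)
    (s : Fin n → X) (j : Fin n) : 0 < empType n s (s j) := by
  unfold empType
  have : 0 < (Finset.univ.filter (fun i => s i = s j)).card :=
    Finset.card_pos.2 ⟨j, by simp⟩
  positivity

lemma sanov_total {X : Type*} [Fintype X] (n : ℕ) {p : X → ℝ} (hp : ∑ x, p x = 1) :
    ∑ s : Fin n → X, ∏ j, p (s j) = 1 := by
  rw [← Fintype.sum_pow, hp, one_pow]

lemma sanov_moments {X : Type*} [Fintype X] {p : X → ℝ} (hp : ∑ x, p x = 1)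
    (f : X → ℝ) (hf : ∑ x, p x * f x = 0) (n : ℕ) :
    ∑ s : Fin n → X, (∏ j, p (s j)) * (∑ j, f (s j)) = 0 ∧
    ∑ s : Fin n → X, (∏ j, p (s j)) * (∑ j, f (s j)) ^ 2 = n * ∑ x, p x * f x ^ 2 := by
  induction n with
  | zero => simp
  | succ n ih =>
    have key : ∀ F : (Fin (n+1) → X) → ℝ, ∑ s, F s = ∑ a : X, ∑ s : Fin n → X, F (Fin.cons a s) := by
      intro F
      rw [← (Fin.consEquiv (fun _ : Fin (n+1) => X)).sum_comp F, Fintype.sum_prod_type]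
      rfl
    have ht := sanov_total n hp
    obtain ⟨h1, h2⟩ := ih
    rw [key, key]
    simp only [Fin.prod_univ_succ, Fin.sum_univ_succ, Fin.cons_zero, Fin.cons_succ]
    constructor
    · have : ∀ a : X, ∑ s : Fin n → X, (p a * ∏ j, p (s j)) * (f a + ∑ j, f (s j)) = p a * f a := by
        intro a
        calc _ = p a * f a * ∑ s : Fin n → X, ∏ j, p (s j)
            + p a * ∑ s : Fin n → X, (∏ j, p (s j)) * (∑ j, f (s j)) := by
              rw [Finset.mul_sum, Finset.mul_sum, ← Finset.sum_add_distrib]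
              exact Finset.sum_congr rfl fun s _ => by ring
          _ = _ := by rw [ht, h1]; ring
      simp only [this, hf]
    · have : ∀ a : X, ∑ s : Fin n → X, (p a * ∏ j, p (s j)) * (f a + ∑ j, f (s j)) ^ 2
          = p a * f a ^ 2 + p a * (n * ∑ x, p x * f x ^ 2) := by
        intro a
        calc _ = p a * f a ^ 2 * ∑ s : Fin n → X, ∏ j, p (s j)
            + 2 * p a * f a * ∑ s : Fin n → X, (∏ j, p (s j)) * (∑ j, f (s j))
            + p a * ∑ s : Fin n → X, (∏ j, p (s j)) * (∑ j, f (s j)) ^ 2 := by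
              rw [Finset.mul_sum, Finset.mul_sum, Finset.mul_sum, ← Finset.sum_add_distrib,
                ← Finset.sum_add_distrib]
              exact Finset.sum_congr rfl fun s _ => by ring
          _ = _ := by rw [ht, h1, h2]; ring
      simp only [this, Finset.sum_add_distrib, ← Finset.sum_mul, hp]
      push_cast
      ring

/-- weak law of large numbers -/
lemma sanov_lln {X : Type*} [Fintype X] [DecidableEq X] {p : X → ℝ} (hp : p ∈ simplexSet X)
    {δ : ℝ} (hδ : 0 < δ) : ∀ᶠ n : ℕ in atTop,
    1 / 2 ≤ ∑ s : Fin n → X with (∀ x, |empType n s x - p x| < δ), ∏ j, p (s j) := by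
  obtain ⟨hp0, hp1⟩ := hp
  let f : X → X → ℝ := fun x y => (if y = x then 1 else 0) - p x
  have hf : ∀ x, ∑ y, p y * f x y = 0 := by
    intro x
    simp [f, mul_sub, Finset.sum_sub_distrib, ← Finset.sum_mul, hp1]
  let V : ℝ := ∑ x, ∑ y, p y * f x y ^ 2
  have hlim : Tendsto (fun n : ℕ => V / δ ^ 2 / (n : ℝ)) atTop (nhds 0) :=
    tendsto_const_div_atTop_nhds_zero_nat _
  filter_upwards [hlim.eventually (gt_mem_nhds (show (0:ℝ) < 1 / 2 by norm_num)),
    eventually_gt_atTop 0] with n hn1 hn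
  have hn' : (0 : ℝ) < n := by positivity
  have htot := sanov_total n hp1
  rw [← Finset.sum_filter_add_sum_filter_not Finset.univ
    (fun s : Fin n → X => ∀ x, |empType n s x - p x| < δ)] at htot
  have hw : ∀ s : Fin n → X, 0 ≤ ∏ j, p (s j) := fun s => Finset.prod_nonneg fun j _ => hp0 _
  have hS : ∀ (s : Fin n → X) x, ∑ j, f x (s j) = n * (empType n s x - p x) := by
    intro s x
    rw [sanov_sum_emp hn]
    have h1 := (sanov_emp_mem hn s).2
    congr 1
    simp [f, mul_sub, Finset.sum_sub_distrib, ← Finset.sum_mul, h1]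
  have hbad : ∑ s : Fin n → X with ¬ (∀ x, |empType n s x - p x| < δ), ∏ j, p (s j)
      ≤ V / δ ^ 2 / n := by
    calc _ ≤ ∑ s : Fin n → X with ¬ (∀ x, |empType n s x - p x| < δ),
          ∑ x, (∏ j, p (s j)) * (∑ j, f x (s j)) ^ 2 / (n * δ) ^ 2 := by
          refine Finset.sum_le_sum fun s hs => ?_
          have hs := (Finset.mem_filter.1 hs).2
          push Not at hs
          obtain ⟨x, hx⟩ := hs
          refine le_trans ?_ (Finset.single_le_sum
            (f := fun x => (∏ j, p (s j)) * (∑ j, f x (s j)) ^ 2 / (n * δ) ^ 2)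
            (fun y _ => div_nonneg (mul_nonneg (hw s) (sq_nonneg _)) (sq_nonneg _))
            (Finset.mem_univ x))
          simp only [hS]
          rw [le_div_iff₀ (by positivity)]
          apply mul_le_mul_of_nonneg_left _ (hw s)
          rw [mul_pow, mul_pow]
          apply mul_le_mul_of_nonneg_left _ (by positivity)
          rw [← sq_abs (empType n s x - p x)]
          exact pow_le_pow_left₀ hδ.le hx 2
      _ ≤ ∑ s : Fin n → X, ∑ x, (∏ j, p (s j)) * (∑ j, f x (s j)) ^ 2 / (n * δ) ^ 2 := by
          refine Finset.sum_le_sum_of_subset_of_nonneg (Finset.filter_subset _ _) ?_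
          intro s _ _
          exact Finset.sum_nonneg fun y _ =>
            div_nonneg (mul_nonneg (hw s) (sq_nonneg _)) (sq_nonneg _)
      _ = V / δ ^ 2 / n := by
          rw [Finset.sum_comm]
          simp only [← Finset.sum_div, (sanov_moments hp1 (f _) (hf _) n).2, ← Finset.mul_sum]
          change n * V / (n * δ) ^ 2 = _
          field_simp
  linarith

lemma sanov_cont {X : Type*} [Fintype X] (q : X → ℝ) (hq : ∀ x, 0 < q x) :
    Continuous (fun p : X → ℝ => Idiv p q) := by
  have : (fun p : X → ℝ => Idiv p q) =
      fun p => ∑ x, (p x * Real.log (p x) - p x * Real.log (q x)) := by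
    funext p
    refine Finset.sum_congr rfl fun x _ => ?_
    by_cases h : p x = 0
    · simp [h]
    · rw [Real.log_div h (hq x).ne']; ring
  rw [this]
  refine continuous_finsetSum _ fun x _ => ?_
  exact (Real.continuous_mul_log.comp (continuous_apply x)).sub
    ((continuous_apply x).mul continuous_const)

lemma sanov_bdd {X : Type*} [Fintype X] (q : X → ℝ) (hq : ∀ x, 0 < q x)
    (Pi : Set (X → ℝ)) (h : Pi ⊆ simplexSet X) : BddBelow ((fun p => Idiv p q) '' Pi) := by
  have hc : IsCompact (Set.Icc (0 : X → ℝ) 1) := isCompact_Icc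
  refine (hc.bddBelow_image (sanov_cont q hq).continuousOn).mono (Set.image_mono ?_)
  intro p hp
  obtain ⟨h0, h1⟩ := h hp
  refine ⟨h0, fun x => ?_⟩
  have := Finset.single_le_sum (f := p) (fun y _ => h0 y) (Finset.mem_univ x)
  simpa [h1] using this

lemma sanov_upper {X : Type*} [Fintype X] [DecidableEq X] (q : X → ℝ)
    (hq : ∀ x, 0 < q x) (Pi : Set (X → ℝ)) (I : ℝ) (hI : ∀ p ∈ Pi, I ≤ Idiv p q)
    {n : ℕ} (hn : 0 < n) :
    typeProb q Pi n ≤ ((n : ℝ) + 1) ^ Fintype.card X * Real.exp (-(n * I)) := by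
  classical
  have h1 : typeProb q Pi n ≤ ∑ s : Fin n → X, (∏ j, empType n s (s j)) * Real.exp (-(n * I)) := by
    unfold typeProb
    refine Finset.sum_le_sum fun s _ => ?_
    have hpr : 0 ≤ ∏ j, empType n s (s j) :=
      Finset.prod_nonneg fun j _ => (sanov_emp_pos hn s j).le
    split_ifs with hs
    · have : ∏ j, q (s j) = (∏ j, empType n s (s j)) * Real.exp (-(n * Idiv (empType n s) q)) := by
        unfold Idiv
        rw [← sanov_sum_emp hn s (fun x => Real.log (empType n s x / q x)),
          ← Finset.sum_neg_distrib, Real.exp_sum, ← Finset.prod_mul_distrib]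
        refine Finset.prod_congr rfl fun j _ => ?_
        have a := sanov_emp_pos hn s j
        have b := hq (s j)
        rw [Real.exp_neg, Real.exp_log (by positivity)]
        field_simp
      rw [this]
      apply mul_le_mul_of_nonneg_left _ hpr
      apply Real.exp_le_exp.2
      have := hI _ hs
      have hn' : (0 : ℝ) < n := by positivity
      nlinarith
    · exact mul_nonneg hpr (Real.exp_pos _).le
  refine h1.trans ?_
  rw [← Finset.sum_mul]
  apply mul_le_mul_of_nonneg_right _ (Real.exp_pos _).le
  let T : Finset (X → ℝ) := Finset.univ.image (empType n : (Fin n → X) → X → ℝ)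
  have hT : (T.card : ℝ) ≤ ((n : ℝ) + 1) ^ Fintype.card X := by
    have hsub : T ⊆ Finset.univ.image (fun (c : X → Fin (n+1)) (x : X) => ((c x : ℕ) : ℝ) / n) := by
      intro t ht
      obtain ⟨s, -, rfl⟩ := Finset.mem_image.1 ht
      refine Finset.mem_image.2 ⟨fun x => ⟨(Finset.univ.filter (fun j => s j = x)).card, ?_⟩,
        Finset.mem_univ _, rfl⟩
      have := Finset.card_filter_le (Finset.univ : Finset (Fin n)) (fun j => s j = x)
      simp only [Finset.card_univ, Fintype.card_fin] at this
      omega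
    have := (Finset.card_le_card hsub).trans Finset.card_image_le
    simp only [Finset.card_univ, Fintype.card_fun, Fintype.card_fin] at this
    exact_mod_cast this
  refine le_trans ?_ hT
  rw [← Finset.sum_fiberwise_of_maps_to (s := Finset.univ) (t := T) (g := empType n)
    (fun s _ => Finset.mem_image_of_mem _ (Finset.mem_univ s))]
  rw [Finset.card_eq_sum_ones, Nat.cast_sum]
  refine Finset.sum_le_sum fun t ht => ?_
  obtain ⟨s0, -, rfl⟩ := Finset.mem_image.1 ht
  obtain ⟨h0, h1⟩ := sanov_emp_mem hn s0
  calc _ = ∑ s : Fin n → X with empType n s = empType n s0, ∏ j, empType n s0 (s j) := by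
        refine Finset.sum_congr rfl fun s hs => ?_
        rw [(Finset.mem_filter.1 hs).2]
    _ ≤ ∑ s : Fin n → X, ∏ j, empType n s0 (s j) :=
        Finset.sum_le_sum_of_subset_of_nonneg (Finset.filter_subset _ _)
          fun s _ _ => Finset.prod_nonneg fun j _ => h0 _
    _ = _ := by rw [sanov_total n h1]; simp

lemma sanov_lower {X : Type*} [Fintype X] [DecidableEq X] (q : X → ℝ)
    (hq : ∀ x, 0 < q x) (Pi : Set (X → ℝ)) (p : X → ℝ) (hp : p ∈ simplexSet X)
    (U : Set (X → ℝ)) (hU : U ∈ nhds p) (hUP : ∀ e ∈ U, e ∈ simplexSet X → e ∈ Pi)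
    (c : ℝ) (hc : Idiv p q < c) :
    ∀ᶠ n : ℕ in atTop, 1 / 2 * Real.exp (-(n * c)) ≤ typeProb q Pi n := by
  classical
  have hL : Continuous (fun e : X → ℝ => ∑ x, e x * Real.log (p x / q x)) := by fun_prop
  have hW : {e : X → ℝ | ∑ x, e x * Real.log (p x / q x) < c} ∈ nhds p :=
    hL.continuousAt.eventually (gt_mem_nhds hc)
  obtain ⟨δ, hδ, hball⟩ := Metric.mem_nhds_iff.1 (Filter.inter_mem hU hW)
  filter_upwards [sanov_lln hp hδ, eventually_gt_atTop 0] with n hl hn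
  have hn' : (0 : ℝ) < n := by positivity
  calc _ ≤ (∑ s : Fin n → X with (∀ x, |empType n s x - p x| < δ), ∏ j, p (s j))
        * Real.exp (-(n * c)) := mul_le_mul_of_nonneg_right hl (Real.exp_pos _).le
    _ = ∑ s : Fin n → X, if (∀ x, |empType n s x - p x| < δ) then
          (∏ j, p (s j)) * Real.exp (-(n * c)) else 0 := by
        rw [Finset.sum_mul, Finset.sum_filter]
    _ ≤ _ := by
        unfold typeProb
        refine Finset.sum_le_sum fun s _ => ?_
        have hq0 : 0 ≤ ∏ j, q (s j) := Finset.prod_nonneg fun j _ => (hq _).le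
        split_ifs with h1 h2 h2
        · have hb : empType n s ∈ Metric.ball p δ := by
            rw [Metric.mem_ball, dist_pi_lt_iff hδ]
            exact h1
          have hlt : ∑ x, empType n s x * Real.log (p x / q x) < c := (hball hb).2
          have h3 : ∏ j, p (s j) ≤ (∏ j, q (s j)) *
              Real.exp (n * ∑ x, empType n s x * Real.log (p x / q x)) := by
            rw [← sanov_sum_emp hn s (fun x => Real.log (p x / q x)), Real.exp_sum,
              ← Finset.prod_mul_distrib]
            refine Finset.prod_le_prod (fun j _ => hp.1 _) fun j _ => ?_
            have b := hq (s j)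
            rcases (hp.1 (s j)).eq_or_lt with h | h
            · rw [← h]; positivity
            · rw [Real.exp_log (by positivity)]
              field_simp
              exact le_rfl
          calc _ ≤ (∏ j, q (s j)) * Real.exp (n * c) * Real.exp (-(n * c)) := by
                apply mul_le_mul_of_nonneg_right _ (Real.exp_pos _).le
                refine h3.trans (mul_le_mul_of_nonneg_left ?_ hq0)
                apply Real.exp_le_exp.2
                nlinarith
            _ = _ := by rw [mul_assoc, ← Real.exp_add]; simp
        · exfalso
          apply h2
          have hb : empType n s ∈ Metric.ball p δ := by
            rw [Metric.mem_ball, dist_pi_lt_iff hδ]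
            exact h1
          exact hUP _ (hball hb).1 (sanov_emp_mem hn s)
        · exact hq0
        · exact le_rfl

theorem stmt9 {X : Type*} [Fintype X] [DecidableEq X] (q : X → ℝ)
    (hq_pos : ∀ x, 0 < q x) (hq_sum : ∑ x, q x = 1)
    (Pi : Set (X → ℝ)) (hPine : Pi.Nonempty) (hPisub : Pi ⊆ simplexSet X)
    (hreg : (Subtype.val ⁻¹' Pi : Set {p : X → ℝ // p ∈ simplexSet X}) =
      closure (interior (Subtype.val ⁻¹' Pi))) :
    Tendsto (fun n : ℕ => (1 / (n : ℝ)) * Real.log (typeProb q Pi n)) atTop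
      (nhds (-sInf ((fun p => Idiv p q) '' Pi))) := by
  have hbdd := sanov_bdd q hq_pos Pi hPisub
  set I := sInf ((fun p => Idiv p q) '' Pi) with hIdef
  have hI : ∀ p ∈ Pi, I ≤ Idiv p q := fun p hp => csInf_le hbdd ⟨p, hp, rfl⟩
  have lower : ∀ c, I < c → ∀ᶠ n : ℕ in atTop,
      1 / 2 * Real.exp (-(n * c)) ≤ typeProb q Pi n := by
    intro c hc
    obtain ⟨_, ⟨p0, hp0, rfl⟩, hlt⟩ := exists_lt_of_csInf_lt (hPine.image _) hc
    have hmem : (⟨p0, hPisub hp0⟩ : {p : X → ℝ // p ∈ simplexSet X}) ∈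
        closure (interior (Subtype.val ⁻¹' Pi)) := by
      rw [← hreg]; exact hp0
    have hcont : Continuous (fun p : {p : X → ℝ // p ∈ simplexSet X} => Idiv p.1 q) :=
      (sanov_cont q hq_pos).comp continuous_subtype_val
    obtain ⟨p, hp1, hp2⟩ := mem_closure_iff_nhds.1 hmem
      {p | Idiv p.1 q < c} (hcont.continuousAt.eventually (gt_mem_nhds hlt))
    obtain ⟨U, hU, hUP⟩ := (mem_nhds_subtype _ _ _).1 (mem_interior_iff_mem_nhds.1 hp2)
    exact sanov_lower q hq_pos Pi p.1 p.2 U hU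
      (fun e he hes => hUP (show (⟨e, hes⟩ : {p : X → ℝ // p ∈ simplexSet X}) ∈ _ from he)) c hp1
  rw [tendsto_order]
  constructor
  · intro a ha
    obtain ⟨c, hc1, hc2⟩ := exists_between (show I < -a by linarith)
    have hlim : Tendsto (fun n : ℕ => Real.log 2 / (n : ℝ)) atTop (nhds 0) :=
      tendsto_const_div_atTop_nhds_zero_nat _
    filter_upwards [lower c hc1, eventually_gt_atTop 0,
      hlim.eventually (gt_mem_nhds (show (0:ℝ) < -a - c by linarith))] with n h1 hn h2
    have hn' : (0 : ℝ) < n := by positivity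
    have h3 := Real.log_le_log (by positivity) h1
    rw [Real.log_mul (by norm_num) (Real.exp_pos _).ne', Real.log_exp, one_div, Real.log_inv] at h3
    rw [one_div, inv_mul_eq_div, lt_div_iff₀ hn']
    rw [div_lt_iff₀ hn'] at h2
    nlinarith
  · intro b hb
    have hlim : Tendsto (fun n : ℕ => (Fintype.card X : ℝ) * (Real.log ((n : ℝ) + 1) / (n : ℝ)))
        atTop (nhds 0) := by
      have h0 : Tendsto (fun x : ℝ => Real.log x ^ 1 / (1 * x + (-1))) atTop (nhds 0) :=
        Real.tendsto_pow_log_div_mul_add_atTop 1 (-1) 1 one_ne_zero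
      have h1 := (h0.comp (tendsto_atTop_add_const_right _ (1:ℝ)
        (tendsto_natCast_atTop_atTop (R := ℝ)))).const_mul (Fintype.card X : ℝ)
      simpa [Function.comp_def] using h1
    filter_upwards [lower (I + 1) (by linarith), eventually_gt_atTop 0,
      hlim.eventually (gt_mem_nhds (show (0:ℝ) < b + I by linarith))] with n h1 hn h2
    have hn' : (0 : ℝ) < n := by positivity
    have hpos : 0 < typeProb q Pi n := lt_of_lt_of_le (by positivity) h1
    have h3 := Real.log_le_log hpos (sanov_upper q hq_pos Pi I hI hn)
    rw [Real.log_mul (by positivity) (Real.exp_pos _).ne', Real.log_exp, Real.log_pow] at h3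
    rw [one_div, inv_mul_eq_div, div_lt_iff₀ hn']
    rw [← mul_div_assoc, div_lt_iff₀ hn'] at h2
    nlinarith
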